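/- arXiv:1003.3069 — 6 statements merged into one kernel-verified Lean document; each statement's English description precedes it below -/
import Mathlib

section
/- Let X be a metric space, T : X → X a continuous map, and u ∈ X a point whose orbit {T^n u : n ≥ 0} has compact closure. If the ω-limit set ω(u) is a finite set, then there exist x ∈ ω(u) and an integer k ≥ 0 with T^{k+1} x = x such that ω(u) = {x, T x, …, T^k x}; i.e. every finite ω-limit set is a single periodic orbit. -/
open Filter Topology

/-- The ω-limit set of `u` under `T`: all limits of convergent subsequences of
the orbit sequence `(T^[n] u)`. -/
def omegaLimitSet {X : Type*} [MetricSpace X] (T : X → X) (u : X) : Set X :=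
  {x | ∃ φ : ℕ → ℕ, StrictMono φ ∧ Tendsto (fun n => T^[φ n] u) atTop (𝓝 x)}

/-- Every finite ω-limit set is a single periodic orbit. -/
theorem finite_omegaLimitSet_is_periodicOrbit {X : Type*} [MetricSpace X]
    (T : X → X) (hT : Continuous T) (u : X)
    (hc : IsCompact (closure (Set.range fun n => T^[n] u)))
    (hfin : (omegaLimitSet T u).Finite) :
    ∃ x ∈ omegaLimitSet T u, ∃ k : ℕ, T^[k + 1] x = x ∧
      omegaLimitSet T u = (fun i => T^[i] x) '' Set.Iic k := by
  have hev : ∀ O : Set X, IsOpen O → omegaLimitSet T u ⊆ O → ∀ᶠ n in atTop, T^[n] u ∈ O := by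
    intro O hO hsub
    by_contra hcon
    obtain ⟨φ, hφ, hφn⟩ := extraction_of_frequently_atTop (not_eventually.mp hcon)
    obtain ⟨a, -, ψ, hψ, ha⟩ := hc.tendsto_subseq
      (x := fun n => T^[φ n] u) (fun n => subset_closure ⟨φ n, rfl⟩)
    have h1 : a ∈ omegaLimitSet T u := ⟨φ ∘ ψ, hφ.comp hψ, ha⟩
    have h2 : a ∈ Oᶜ := hO.isClosed_compl.mem_of_tendsto ha
      (Eventually.of_forall fun n => hφn (ψ n))
    exact h2 (hsub h1)
  have hinv : ∀ y ∈ omegaLimitSet T u, T y ∈ omegaLimitSet T u := by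
    rintro y ⟨φ, hφ, hy⟩
    refine ⟨fun n => φ n + 1, fun a b h => Nat.succ_lt_succ (hφ h), ?_⟩
    have := (hT.tendsto y).comp hy
    simpa only [Function.iterate_succ_apply', Function.comp_def] using this
  have hit : ∀ y ∈ omegaLimitSet T u, ∀ i, T^[i] y ∈ omegaLimitSet T u := by
    intro y hy i
    induction i with
    | zero => exact hy
    | succ i ih => rw [Function.iterate_succ_apply']; exact hinv _ ih
  obtain ⟨w, -, φ₀, hφ₀, hw₀⟩ := hc.tendsto_subseq
      (x := fun n => T^[n] u) (fun n => subset_closure ⟨n, rfl⟩)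
  have hw : w ∈ omegaLimitSet T u := ⟨φ₀, hφ₀, hw₀⟩
  obtain ⟨a, b, hab, heq⟩ := hfin.exists_lt_map_eq_of_forall_mem (hit w hw)
  obtain ⟨k, rfl⟩ : ∃ k, b = (k + 1) + a := ⟨b - a - 1, by omega⟩
  have hxW := hit w hw a
  rw [Function.iterate_add_apply] at heq
  generalize T^[a] w = x at heq hxW
  refine ⟨x, hxW, k, heq.symm, ?_⟩
  have hPT : ∀ y ∈ (fun i => T^[i] x) '' Set.Iic k, T y ∈ (fun i => T^[i] x) '' Set.Iic k := by
    rintro _ ⟨i, hi, rfl⟩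
    rcases Nat.lt_or_ge i k with h | h
    · exact ⟨i + 1, h, Function.iterate_succ_apply' T i x⟩
    · have : i = k := le_antisymm hi h
      subst this
      refine ⟨0, Nat.zero_le _, ?_⟩
      simp only [← Function.iterate_succ_apply' T]
      exact heq
  have hPx : x ∈ (fun i => T^[i] x) '' Set.Iic k := ⟨0, Nat.zero_le _, rfl⟩
  have hPfin : ((fun i => T^[i] x) '' Set.Iic k).Finite := (Set.finite_Iic k).image _
  have hPW : (fun i => T^[i] x) '' Set.Iic k ⊆ omegaLimitSet T u := by
    rintro _ ⟨i, -, rfl⟩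
    exact hit x hxW i
  generalize (fun i => T^[i] x) '' Set.Iic k = P at *
  refine Set.Subset.antisymm ?_ hPW
  intro y hy
  by_contra hyP
  obtain ⟨U, V, hU, hV, hPU, hQV, hUV⟩ := SeparatedNhds.of_isCompact_isCompact
    hPfin.isCompact (hfin.subset (Set.diff_subset (t := P))).isCompact Set.disjoint_sdiff_right
  have hU' : IsOpen (U ∩ T ⁻¹' U) := hU.inter (hU.preimage hT)
  have hPU' : P ⊆ U ∩ T ⁻¹' U := fun z hz => ⟨hPU hz, hPU (hPT z hz)⟩
  obtain ⟨N, hN⟩ := eventually_atTop.mp (hev ((U ∩ T ⁻¹' U) ∪ V) (hU'.union hV) (by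
    intro z hz
    by_cases h : z ∈ P
    · exact Or.inl (hPU' h)
    · exact Or.inr (hQV ⟨hz, h⟩)))
  obtain ⟨φ, hφ, hx⟩ := hxW
  obtain ⟨n, hn, hnN⟩ := ((hx.eventually (hU'.mem_nhds (hPU' hPx))).and
    (hφ.tendsto_atTop.eventually_ge_atTop N)).exists
  have hstay : ∀ m, φ n ≤ m → T^[m] u ∈ U ∩ T ⁻¹' U := by
    intro m hm
    induction m, hm using Nat.le_induction with
    | base => exact hn
    | succ m hm ih =>
      rcases hN (m + 1) (by omega) with h | h
      · exact h
      · refine absurd h (Set.disjoint_left.mp hUV ?_)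
        rw [Function.iterate_succ_apply']
        exact ih.2
  obtain ⟨ψ, hψ, hyt⟩ := hy
  obtain ⟨m, hm, hmN⟩ := ((hyt.eventually (hV.mem_nhds (hQV ⟨⟨ψ, hψ, hyt⟩, hyP⟩))).and
    (hψ.tendsto_atTop.eventually_ge_atTop (φ n))).exists
  exact Set.disjoint_left.mp hUV (hstay _ hmN).1 hm
end

section
/- Let X be a metric space with metric d, T : X → X a continuous map, and u ∈ X a point whose orbit {T^n u : n ≥ 0} has compact closure. Assume the restriction of T to the closure of the orbit of u is non-expansive, i.e. d(T x, T y) ≤ d(x, y) for all x, y in this closure. Then the dynamical system (ω(u), T restricted to ω(u)) is minimal: for every y ∈ ω(u), the ω-limit set ω(y) of y equals ω(u) (equivalently, the closure of the orbit of y equals ω(u)). -/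
open Filter Topology

theorem mem_omegaLimitSet_iff_aux {X : Type*} [MetricSpace X] (T : X → X) (u x : X) :
    x ∈ omegaLimitSet T u ↔ ∀ ε > 0, ∀ N : ℕ, ∃ n ≥ N, dist (T^[n] u) x < ε := by
  constructor
  · rintro ⟨φ, hφ, hlim⟩ ε hε N
    obtain ⟨M, hM⟩ := Metric.tendsto_atTop.1 hlim ε hε
    exact ⟨φ (max M N), (le_max_right M N).trans (hφ.id_le _), hM _ (le_max_left M N)⟩
  · intro h
    have hcl : MapClusterPt x atTop (fun n => T^[n] u) := by
      rw [Metric.nhds_basis_ball.mapClusterPt_iff_frequently]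
      intro ε hε
      rw [frequently_atTop]
      intro N
      obtain ⟨n, hn, hd⟩ := h ε hε N
      exact ⟨n, hn, hd⟩
    obtain ⟨φ, hφ, hl⟩ := TopologicalSpace.FirstCountableTopology.tendsto_subseq hcl
    exact ⟨φ, hφ, hl⟩

/-- If `T` is non-expansive on the orbit closure of `u`, then `(ω(u), T)` is a
minimal dynamical system: `ω(y) = ω(u)` for every `y ∈ ω(u)`. -/
theorem nonexpansive_omegaLimitSet_minimal {X : Type*} [MetricSpace X]
    (T : X → X) (hT : Continuous T) (u : X)
    (hc : IsCompact (closure (Set.range fun n => T^[n] u)))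
    (hne : ∀ x ∈ closure (Set.range fun n => T^[n] u),
      ∀ y ∈ closure (Set.range fun n => T^[n] u), dist (T x) (T y) ≤ dist x y) :
    ∀ y ∈ omegaLimitSet T u, omegaLimitSet T y = omegaLimitSet T u := by
  intro y hy
  have hyc : y ∈ closure (Set.range fun n => T^[n] u) := by
    obtain ⟨φ, _, hl⟩ := hy
    exact mem_closure_of_tendsto hl (Eventually.of_forall fun n => ⟨φ n, rfl⟩)
  have hmaps : ∀ x ∈ closure (Set.range fun n => T^[n] u),
      T x ∈ closure (Set.range fun n => T^[n] u) := by
    intro x hx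
    refine map_mem_closure hT hx ?_
    rintro _ ⟨n, rfl⟩
    exact ⟨n + 1, Function.iterate_succ_apply' T n u⟩
  have hit : ∀ (n : ℕ) (a b : X), a ∈ closure (Set.range fun n => T^[n] u) →
      b ∈ closure (Set.range fun n => T^[n] u) → dist (T^[n] a) (T^[n] b) ≤ dist a b := by
    intro n
    induction n with
    | zero => intro a b _ _; exact le_rfl
    | succ k ih =>
      intro a b ha hb
      rw [Function.iterate_succ_apply, Function.iterate_succ_apply]
      exact (ih _ _ (hmaps a ha) (hmaps b hb)).trans (hne a ha b hb)
  have hkey : ∀ n m : ℕ, dist (T^[n + m] u) (T^[n] y) ≤ dist (T^[m] u) y := by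
    intro n m
    rw [Function.iterate_add_apply]
    exact hit n _ _ (subset_closure ⟨m, rfl⟩) hyc
  rw [mem_omegaLimitSet_iff_aux] at hy
  ext z
  rw [mem_omegaLimitSet_iff_aux, mem_omegaLimitSet_iff_aux]
  constructor
  · intro h ε hε N
    obtain ⟨n, hn, hd⟩ := h (ε / 2) (half_pos hε) N
    obtain ⟨m, _, hm⟩ := hy (ε / 2) (half_pos hε) 0
    refine ⟨n + m, by omega, ?_⟩
    linarith [hkey n m, dist_triangle (T^[n + m] u) (T^[n] y) z]
  · intro h ε hε N
    obtain ⟨m, _, hm⟩ := hy (ε / 2) (half_pos hε) 0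
    obtain ⟨k, hk, hd⟩ := h (ε / 2) (half_pos hε) (N + m)
    obtain ⟨n, rfl⟩ : ∃ n, k = n + m := ⟨k - m, by omega⟩
    refine ⟨n, by omega, ?_⟩
    linarith [hkey n m, dist_triangle_left (T^[n] y) z (T^[n + m] u)]
end

section
/- Let X be a metric space with metric d, T : X → X a continuous map, and u ∈ X a point whose orbit {T^n u : n ≥ 0} has compact closure. Assume: (a) d(T x, T y) ≤ d(x, y) for all x, y in the closure of the orbit of u; (b) for every integer N ≥ 1, the ω-limit set of u under T^N equals the ω-limit set ω(u) of u under T; and (c) for every integer N ≥ 1, there is exactly one Borel probability measure μ on X with μ(ω(u)) = 1 that is invariant under T^N (i.e. μ(T^{-N} B) = μ(B) for every Borel set B). Then ω(u) is a connected set. -/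
open Filter Topology

/-- A set whose two pieces have disjoint thickenings, with a sequence staying near one piece. -/
lemma omega_aux {X : Type*} [MetricSpace X] (S : X → X) (u : X) (A B : Set X) (δ : ℝ) (hδ : 0 < δ)
    (hAB : Disjoint (Metric.thickening δ A) (Metric.thickening δ B))
    (n0 : ℕ)
    (hstep : ∀ n, n0 ≤ n → dist (S^[n + 1] u) (S^[n] u) < δ / 2)
    (hnear : ∀ n, n0 ≤ n → S^[n] u ∈ Metric.thickening (δ / 2) A ∪ Metric.thickening (δ / 2) B)
    (h0 : S^[n0] u ∈ Metric.thickening (δ / 2) A) :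
    ∀ x ∈ omegaLimitSet S u, x ∉ B := by
  have hall : ∀ n, n0 ≤ n → S^[n] u ∈ Metric.thickening (δ / 2) A := by
    intro n hn
    induction n, hn using Nat.le_induction with
    | base => exact h0
    | succ n hn ih =>
      rcases hnear (n + 1) (by omega) with h | h
      · exact h
      · exfalso
        refine Set.disjoint_left.1 hAB ?_ (Metric.thickening_mono (by linarith) B h)
        obtain ⟨z, hz, hd⟩ := Metric.mem_thickening_iff.1 ih
        refine Metric.mem_thickening_iff.2 ⟨z, hz, ?_⟩
        have := hstep n hn
        have := dist_triangle (S^[n + 1] u) (S^[n] u) z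
        linarith
  rintro x ⟨φ, hφ, hlim⟩ hx
  have h1 : Metric.thickening δ B ∈ 𝓝 x :=
    Metric.isOpen_thickening.mem_nhds (Metric.self_subset_thickening hδ B hx)
  have h2 := hlim.eventually h1
  have h3 := hφ.tendsto_atTop.eventually (eventually_ge_atTop n0)
  obtain ⟨n, hn1, hn2⟩ := (h2.and h3).exists
  exact Set.disjoint_left.1 hAB (Metric.thickening_mono (by linarith) A (hall _ hn2)) hn1

lemma omega_closed {X : Type*} [MetricSpace X] (T : X → X) (u : X) :
    IsClosed (omegaLimitSet T u) := by
  have : omegaLimitSet T u = {x | MapClusterPt x atTop (fun n => T^[n] u)} := by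
    ext x
    constructor
    · rintro ⟨φ, hφ, h⟩
      exact MapClusterPt.of_comp hφ.tendsto_atTop h.mapClusterPt
    · intro h
      exact MapClusterPt.tendsto_subseq h
  rw [this]
  exact isClosed_setOfPred_clusterPt

/-- If `T` is non-expansive on the orbit closure of `u`, the ω-limit set of `u`
under `T^N` equals `ω(u)` for every `N ≥ 1`, and for every `N ≥ 1` the system
`(ω(u), T^N)` is uniquely ergodic, then `ω(u)` is connected. -/
theorem omegaLimitSet_connected {X : Type*} [MetricSpace X]
    [MeasurableSpace X] [BorelSpace X]
    (T : X → X) (hT : Continuous T) (u : X)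
    (hc : IsCompact (closure (Set.range fun n => T^[n] u)))
    (hne : ∀ x ∈ closure (Set.range fun n => T^[n] u),
      ∀ y ∈ closure (Set.range fun n => T^[n] u), dist (T x) (T y) ≤ dist x y)
    (homega : ∀ N : ℕ, 1 ≤ N → omegaLimitSet (T^[N]) u = omegaLimitSet T u)
    (herg : ∀ N : ℕ, 1 ≤ N → ∃! μ : MeasureTheory.Measure X,
      MeasureTheory.IsProbabilityMeasure μ ∧ μ (omegaLimitSet T u) = 1 ∧
      ∀ B : Set X, MeasurableSet B → μ (T^[N] ⁻¹' B) = μ B) :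
    IsConnected (omegaLimitSet T u) := by
  have hmem : ∀ n, T^[n] u ∈ closure (Set.range fun n => T^[n] u) :=
    fun n => subset_closure ⟨n, rfl⟩
  have hcl := omega_closed T u
  have hsub : omegaLimitSet T u ⊆ closure (Set.range fun n => T^[n] u) := by
    rintro x ⟨φ, -, h⟩
    exact isClosed_closure.mem_of_tendsto h (Eventually.of_forall fun n => hmem _)
  have hcomp : IsCompact (omegaLimitSet T u) := hc.of_isClosed_subset hcl hsub
  obtain ⟨x0, -, φ, hφ, hlim⟩ := hc.tendsto_subseq hmem
  refine ⟨⟨x0, φ, hφ, hlim⟩, ?_⟩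
  rw [isPreconnected_iff_subset_of_fully_disjoint_closed hcl]
  intro U V hU hV hUV hdisj
  obtain ⟨δ, hδ, hth⟩ := (hdisj.mono (Set.inter_subset_right (s := omegaLimitSet T u))
    (Set.inter_subset_right (s := omegaLimitSet T u))).exists_thickenings
    (hcomp.inter_right hU) (hcl.inter hV)
  -- eventually near the limit set
  have hev : ∀ᶠ n in atTop, T^[n] u ∈ Metric.thickening (δ / 2) (omegaLimitSet T u) := by
    by_contra hcon
    have hfr : ∃ᶠ n in atTop, T^[n] u ∉ Metric.thickening (δ / 2) (omegaLimitSet T u) :=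
      not_eventually.1 hcon
    obtain ⟨ψ, hψ, hout⟩ := extraction_of_frequently_atTop hfr
    obtain ⟨y, -, χ, hχ, hy⟩ := hc.tendsto_subseq (fun n => hmem (ψ n))
    have hyω : y ∈ omegaLimitSet T u := ⟨ψ ∘ χ, hψ.comp hχ, hy⟩
    have h1 : Metric.thickening (δ / 2) (omegaLimitSet T u) ∈ 𝓝 y :=
      Metric.isOpen_thickening.mem_nhds (Metric.self_subset_thickening (by linarith) _ hyω)
    obtain ⟨n, hn⟩ := (hy.eventually h1).exists
    exact hout _ hn
  -- an almost period
  obtain ⟨m, k, hk, hmk⟩ : ∃ m k : ℕ, 1 ≤ k ∧ dist (T^[m + k] u) (T^[m] u) < δ / 2 := by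
    obtain ⟨N, hN⟩ := Metric.cauchySeq_iff.1 hlim.cauchySeq (δ / 2) (by linarith)
    have hlt : φ N < φ (N + 1) := hφ (Nat.lt_succ_self N)
    refine ⟨φ N, φ (N + 1) - φ N, by omega, ?_⟩
    have := hN (N + 1) (by omega) N le_rfl
    rwa [Nat.add_sub_cancel' hlt.le]
  have hper : ∀ j, m ≤ j → dist (T^[j + k] u) (T^[j] u) < δ / 2 := by
    intro j hj
    induction j, hj using Nat.le_induction with
    | base => exact hmk
    | succ j hj ih =>
      rw [show j + 1 + k = (j + k) + 1 by omega, Function.iterate_succ_apply',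
        Function.iterate_succ_apply']
      exact (hne _ (hmem _) _ (hmem _)).trans_lt ih
  obtain ⟨M, hM⟩ := eventually_atTop.1 hev
  have hge : ∀ n, m + M ≤ n → m + M ≤ k * n := fun n hn => hn.trans (Nat.le_mul_of_pos_left n hk)
  have hstep : ∀ n, m + M ≤ n → dist ((T^[k])^[n + 1] u) ((T^[k])^[n] u) < δ / 2 := by
    intro n hn
    have := hge n hn
    rw [← Function.iterate_mul, ← Function.iterate_mul, Nat.mul_succ]
    exact hper _ (by omega)
  have hnear : ∀ n, m + M ≤ n → (T^[k])^[n] u ∈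
      Metric.thickening (δ / 2) (omegaLimitSet T u ∩ U) ∪
      Metric.thickening (δ / 2) (omegaLimitSet T u ∩ V) := by
    intro n hn
    have := hge n hn
    rw [← Function.iterate_mul, ← Metric.thickening_union, ← Set.inter_union_distrib_left,
      Set.inter_eq_left.2 hUV]
    exact hM _ (by omega)
  rcases hnear _ le_rfl with h | h
  · left
    intro x hx
    have := omega_aux _ u _ _ δ hδ hth _ hstep hnear h x (by rwa [homega k hk])
    exact (hUV hx).resolve_right fun hv => this ⟨hx, hv⟩
  · right
    intro x hx
    have := omega_aux _ u _ _ δ hδ hth.symm _ hstep (fun n hn => (hnear n hn).symm) h x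
      (by rwa [homega k hk])
    exact (hUV hx).resolve_left fun hv => this ⟨hx, hv⟩
end

section
/- Let 0 < α ≤ 3/4 and let x_*(α) = (√(1+4α) − 1)/(2α), the unique positive fixed point of T_α. Then x_*(α) is globally attractive on [−1, 1]: for every x ∈ [−1, 1], the iterates T_α^n(x) converge to x_*(α) as n → ∞. -/
open Filter Topology

theorem aux_conv (f g : ℝ → ℝ) (hf : Continuous f) (p : ℝ) 
    (hm : ∀ x, 0 ≤ x → x ≤ 1 → 0 ≤ f x ∧ f x ≤ 1)
    (hg : ∀ x, 0 ≤ x → x ≤ 1 → f x - p = (x - p) * g x ∧ 0 ≤ g x ∧ g x ≤ 1 ∧ (x ≠ p → g x < 1))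
    (x : ℝ) (hx0 : 0 ≤ x) (hx1 : x ≤ 1) : Tendsto (fun n => f^[n] x) atTop (𝓝 p) := by
  have hr : ∀ n, 0 ≤ f^[n] x ∧ f^[n] x ≤ 1 := by
    intro n
    induction n with
    | zero => exact ⟨hx0, hx1⟩
    | succ n ih => rw [Function.iterate_succ_apply']; exact hm _ ih.1 ih.2
  have key : ∀ a, Tendsto (fun n => f^[n] x) atTop (𝓝 a) → a = p := by
    intro a ha
    have hfix : f a = a := isFixedPt_of_tendsto_iterate ha hf.continuousAt
    have h0 : 0 ≤ a := ge_of_tendsto' ha fun n => (hr n).1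
    have h1 : a ≤ 1 := le_of_tendsto' ha fun n => (hr n).2
    obtain ⟨e, _, _, hs⟩ := hg a h0 h1
    by_contra hne
    have := hs hne
    rw [hfix] at e
    have h2 : (a - p) * (1 - g a) = 0 := by linarith
    rcases mul_eq_zero.1 h2 with h | h
    · exact hne (by linarith)
    · linarith
  rcases le_total x p with h | h
  · have hs : ∀ n, f^[n] x ≤ p := by
      intro n
      induction n with
      | zero => exact h
      | succ n ih =>
        rw [Function.iterate_succ_apply']
        obtain ⟨e, e0, _, _⟩ := hg _ (hr n).1 (hr n).2
        nlinarith
    have hmono : Monotone (fun n => f^[n] x) := by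
      refine monotone_nat_of_le_succ fun n => ?_
      have := hs n
      rw [Function.iterate_succ_apply']
      obtain ⟨e, _, e1, _⟩ := hg _ (hr n).1 (hr n).2
      nlinarith
    have ht := tendsto_atTop_ciSup hmono ⟨1, by rintro _ ⟨n, rfl⟩; exact (hr n).2⟩
    rwa [key _ ht] at ht
  · have hs : ∀ n, p ≤ f^[n] x := by
      intro n
      induction n with
      | zero => exact h
      | succ n ih =>
        rw [Function.iterate_succ_apply']
        obtain ⟨e, e0, _, _⟩ := hg _ (hr n).1 (hr n).2
        nlinarith
    have hmono : Antitone (fun n => f^[n] x) := by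
      refine antitone_nat_of_succ_le fun n => ?_
      have := hs n
      rw [Function.iterate_succ_apply']
      obtain ⟨e, _, e1, _⟩ := hg _ (hr n).1 (hr n).2
      nlinarith
    have ht := tendsto_atTop_ciInf hmono ⟨0, by rintro _ ⟨n, rfl⟩; exact (hr n).1⟩
    rwa [key _ ht] at ht

/-- For `0 < α ≤ 3/4`, the fixed point `x_*(α) = (√(1+4α) − 1)/(2α)` of
`T_α(x) = 1 − αx²` is globally attractive on `[−1, 1]`. -/
theorem fixed_point_globally_attractive (α : ℝ) (h0 : 0 < α) (h1 : α ≤ 3 / 4) :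
    ∀ x ∈ Set.Icc (-1 : ℝ) 1,
      Tendsto (fun n => (fun y : ℝ => 1 - α * y ^ 2)^[n] x) atTop
        (𝓝 ((Real.sqrt (1 + 4 * α) - 1) / (2 * α))) := by
  intro x hx
  obtain ⟨s, hs⟩ : ∃ s, s = Real.sqrt (1 + 4 * α) := ⟨_, rfl⟩
  have hs2 : s ^ 2 = 1 + 4 * α := by rw [hs]; exact Real.sq_sqrt (by linarith)
  have hsn : 0 ≤ s := by rw [hs]; exact Real.sqrt_nonneg _
  rw [← hs]
  obtain ⟨p, hp⟩ : ∃ p, p = (s - 1) / (2 * α) := ⟨_, rfl⟩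
  rw [← hp]
  have hq : α * p = (s - 1) / 2 := by rw [hp]; field_simp
  have hs1 : 1 < s := by nlinarith
  have hs3 : s ≤ 2 := by nlinarith
  have hqe : (α * p) ^ 2 + α * p = α := by rw [hq]; nlinarith
  have hpe : α * p ^ 2 + p = 1 := by
    apply mul_left_cancel₀ h0.ne'
    linarith
  have hq0 : 0 < α * p := by rw [hq]; linarith
  have hq1 : α * p ≤ 1 / 2 := by rw [hq]; linarith
  set T : ℝ → ℝ := fun y : ℝ => 1 - α * y ^ 2 with hT
  have hTc : Continuous T := by fun_prop
  have hTr : ∀ y, -1 ≤ y → y ≤ 1 → 0 ≤ T y ∧ T y ≤ 1 := by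
    intro y a b
    have : y ^ 2 ≤ 1 := by nlinarith
    have := sq_nonneg y
    simp only [hT]
    constructor <;> nlinarith
  have hTp : T p = p := by simp only [hT]; linarith
  have conv := aux_conv (T^[2]) (fun x => (α * x + α * p) * (α * T x + α * p)) (hTc.iterate 2) p
    (fun y a b => by
      have h := hTr y (by linarith) b
      exact hTr (T y) (by linarith) h.2)
    (fun y a b => by
      have h := hTr y (by linarith) b
      have hay : 0 ≤ α * y := by positivity
      have haT : 0 ≤ α * T y := mul_nonneg h0.le h.1
      refine ⟨?_, ?_, ?_⟩
      · change 1 - α * (T y) ^ 2 - p = _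
        have e1 : T y - p = - α * (y - p) * (y + p) := by
          simp only [hT]; linear_combination -hpe
        linear_combination (-hpe) + (-α * (T y + p)) * e1
      · positivity
      · have e : α * T y = (α * p) ^ 2 + α * p - (α * y) ^ 2 := by
          rw [hqe]; simp only [hT]; ring
        have main : (α * y + α * p) * (α * T y + α * p) ≤ 1 - (α * y - 1 / 2) ^ 2 * (α * y + 3 / 2)
            - (1 / 2 - α * p) * (α * p) := by
          have hw := haT
          rw [e] at hw ⊢
          generalize α * y = u at *
          generalize α * p = q at *
          nlinarith [mul_nonneg (sub_nonneg.2 hq1) hw, mul_nonneg (sub_nonneg.2 hq1) hay, mul_nonneg (sub_nonneg.2 hq1) (mul_nonneg hay hq0.le), mul_nonneg (sub_nonneg.2 hq1) hq0.le]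
        have n1 : 0 ≤ (α * y - 1 / 2) ^ 2 * (α * y + 3 / 2) := by positivity
        have n2 : 0 ≤ (1 / 2 - α * p) * (α * p) := mul_nonneg (by linarith) hq0.le
        refine ⟨by linarith, fun hne => ?_⟩
        rcases eq_or_lt_of_le hq1 with hh | hh
        · have : α * y - 1 / 2 ≠ 0 := by
            intro h'
            exact hne (mul_left_cancel₀ h0.ne' (by linarith))
          have : 0 < (α * y - 1 / 2) ^ 2 * (α * y + 3 / 2) := by positivity
          linarith
        · have : 0 < (1 / 2 - α * p) * (α * p) := mul_pos (by linarith) hq0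
          linarith)
  have hx1 := hTr x hx.1 hx.2
  have A := conv (T x) hx1.1 hx1.2
  have B : Tendsto (fun n => T ((T^[2])^[n] (T x))) atTop (𝓝 p) := by
    have := (hTc.tendsto p).comp A
    rwa [hTp] at this
  rw [Metric.tendsto_atTop] at A B ⊢
  intro ε hε
  obtain ⟨N, hN⟩ := A ε hε
  obtain ⟨M, hM⟩ := B ε hε
  refine ⟨2 * N + 2 * M + 2, fun n hn => ?_⟩
  obtain ⟨k, rfl | rfl⟩ : ∃ k, n = 2 * k + 1 ∨ n = 2 * k + 2 := ⟨(n - 1) / 2, by omega⟩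
  · have := hN k (by omega)
    rwa [← Function.iterate_mul, ← Function.iterate_succ_apply] at this
  · have := hM k (by omega)
    rwa [← Function.iterate_mul, ← Function.iterate_succ_apply, ← Function.iterate_succ_apply' T] at this
end

section
/- Let 0 < α < 2. Then there is no nonempty set K ⊆ ℝ such that for every x ∈ K one has x ≤ 1, √((1−x)/α) ∈ K, and −√((1−x)/α) ∈ K. (Since the Julia set J(T_α) of T_α(z) = 1 − αz² is nonempty, completely invariant — so that both complex preimages ±√((1−z)/α) of any point z ∈ J(T_α) lie in J(T_α) — this proves that J(T_α) is not contained in ℝ for any α ∈ (0,2).) -/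
/-- For `0 < α < 2` there is no nonempty set `K ⊆ ℝ` with `x ≤ 1`,
`√((1−x)/α) ∈ K` and `−√((1−x)/α) ∈ K` for every `x ∈ K`. Since the Julia set
of `T_α(z) = 1 − αz²` is nonempty and closed under both preimage branches,
this shows `J(T_α)` is not contained in `ℝ`. -/
theorem no_real_preimage_closed_set (α : ℝ) (h0 : 0 < α) (h2 : α < 2) :
    ¬ ∃ K : Set ℝ, K.Nonempty ∧ ∀ x ∈ K,
        x ≤ 1 ∧ Real.sqrt ((1 - x) / α) ∈ K ∧ -Real.sqrt ((1 - x) / α) ∈ K := by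
  rintro ⟨K, ⟨x, hx⟩, hK⟩
  have key : ∀ n : ℕ, ∃ y : ℝ, 0 ≤ y ∧ y ∈ K ∧ -y ∈ K ∧ n * ((2 - α) / 2) ≤ α * y ^ 2 := by
    intro n
    induction n with
    | zero =>
      refine ⟨_, Real.sqrt_nonneg _, (hK x hx).2.1, (hK x hx).2.2, ?_⟩
      simp only [Nat.cast_zero, zero_mul]
      positivity
    | succ n ih =>
      obtain ⟨y, hy0, hy, hny, hn⟩ := ih
      have hy1 := (hK y hy).1
      refine ⟨_, Real.sqrt_nonneg _, (hK _ hny).2.1, (hK _ hny).2.2, ?_⟩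
      have hnn : 0 ≤ (1 - -y) / α := div_nonneg (by linarith) h0.le
      rw [Real.sq_sqrt hnn, mul_div_cancel₀ _ h0.ne']
      push_cast
      have h3 : 0 ≤ α * (y * (1 - y)) :=
        mul_nonneg h0.le (mul_nonneg hy0 (by linarith))
      have h4 : 0 ≤ (2 - α) * y := mul_nonneg (by linarith) hy0
      have h5 : 0 ≤ α * (1 - y) := mul_nonneg h0.le (by linarith)
      nlinarith
  obtain ⟨n, hn⟩ := exists_nat_gt (α / ((2 - α) / 2))
  rw [div_lt_iff₀ (by linarith)] at hn
  obtain ⟨y, hy0, hy, -, h⟩ := key n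
  have hy1 := (hK y hy).1
  nlinarith [mul_nonneg h0.le (mul_nonneg hy0 (sub_nonneg.2 hy1)), mul_nonneg h0.le (sub_nonneg.2 hy1)]
end

section
/- Let 0 < α < 2. Then there is no sequence (b_n)_{n≥1} of real numbers satisfying 0 < b_n ≤ α − 1 and b_{n+1} = α·b_n² − 1 for every n ≥ 1. -/
/-- For `0 < α < 2`, there is no sequence `(b_n)_{n≥1}` of reals with
`0 < b_n ≤ α − 1` and `b_{n+1} = α b_n² − 1` for all `n ≥ 1`. -/
theorem no_bounded_recursion_sequence (α : ℝ) (h0 : 0 < α) (h2 : α < 2) :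
    ¬ ∃ b : ℕ → ℝ, ∀ n : ℕ, 1 ≤ n →
        (0 < b n ∧ b n ≤ α - 1) ∧ b (n + 1) = α * (b n) ^ 2 - 1 := by
  rintro ⟨b, hb⟩
  have step : ∀ n, 1 ≤ n → b (n + 1) ≤ b n - (2 - α) := by
    intro n hn
    obtain ⟨⟨hp, hl⟩, he⟩ := hb n hn
    rw [he]
    have h1 : α * b n ≤ 2 := by nlinarith
    have h3 : (α * b n) * b n ≤ 2 * b n := mul_le_mul_of_nonneg_right h1 hp.le
    nlinarith
  have key : ∀ n : ℕ, b (n + 1) ≤ b 1 - n * (2 - α) := by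
    intro n
    induction n with
    | zero => simp
    | succ k ih =>
      have := step (k + 1) (by omega)
      push_cast
      linarith
  obtain ⟨n, hn⟩ := exists_nat_gt (b 1 / (2 - α))
  rw [div_lt_iff₀ (by linarith)] at hn
  have := (hb (n + 1) (by omega)).1.1
  linarith [key n]
end
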